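/- Let m, n ∈ ℕ with n ≥ 2. The operator (−Δ)^m with domain C₀^∞(ℝⁿ∖{0}) is essentially self-adjoint in L²(ℝⁿ; dⁿx) if and only if n ≥ 4m. -/

import Mathlib

open MeasureTheory

noncomputable section

/-- A densely defined operator `T` in a complex Hilbert space is *essentially self-adjoint*
if its adjoint `T*` is self-adjoint (equivalently, its closure is self-adjoint). -/
def EssentiallySelfAdjoint {H : Type*} [NormedAddCommGroup H] [InnerProductSpace ℂ H]
    [CompleteSpace H] (T : H →ₗ.[ℂ] H) : Prop :=
  Dense (T.domain : Set H) ∧ IsSelfAdjoint T.adjoint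

/-- The Laplacian of `f : ℝⁿ → ℂ`. -/
def laplacian {n : ℕ} (f : EuclideanSpace ℝ (Fin n) → ℂ) (x : EuclideanSpace ℝ (Fin n)) : ℂ :=
  ∑ i : Fin n, fderiv ℝ (fun y => fderiv ℝ f y (EuclideanSpace.single i (1:ℝ))) x
    (EuclideanSpace.single i (1:ℝ))

/-- The graph of the operator given by the formal differential expression `L` with domain
`C₀^∞(ℝⁿ \ {0})`, as a subspace of `L²(ℝⁿ) × L²(ℝⁿ)`. -/
def graphOf (n : ℕ) (L : (EuclideanSpace ℝ (Fin n) → ℂ) → (EuclideanSpace ℝ (Fin n) → ℂ)) :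
    Submodule ℂ (Lp ℂ 2 (volume : Measure (EuclideanSpace ℝ (Fin n))) ×
      Lp ℂ 2 (volume : Measure (EuclideanSpace ℝ (Fin n)))) :=
  Submodule.span ℂ {p | ∃ φ : EuclideanSpace ℝ (Fin n) → ℂ,
    ContDiff ℝ (⊤ : ℕ∞) φ ∧ HasCompactSupport φ ∧ (0 : EuclideanSpace ℝ (Fin n)) ∉ tsupport φ ∧
    (p.1 : EuclideanSpace ℝ (Fin n) → ℂ) =ᵐ[volume] φ ∧
    (p.2 : EuclideanSpace ℝ (Fin n) → ℂ) =ᵐ[volume] L φ}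

/-- The operator in `L²(ℝⁿ)` given by the formal differential expression `L` with domain
`C₀^∞(ℝⁿ \ {0})`. -/
def opOn (n : ℕ) (L : (EuclideanSpace ℝ (Fin n) → ℂ) → (EuclideanSpace ℝ (Fin n) → ℂ)) :
    Lp ℂ 2 (volume : Measure (EuclideanSpace ℝ (Fin n))) →ₗ.[ℂ]
      Lp ℂ 2 (volume : Measure (EuclideanSpace ℝ (Fin n))) :=
  (graphOf n L).toLinearPMap

/-- The negative Laplacian `-Δ`. -/
def negLap {n : ℕ} (f : EuclideanSpace ℝ (Fin n) → ℂ) : EuclideanSpace ℝ (Fin n) → ℂ :=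
  fun x => -laplacian f x

/-- The operator `(-Δ)^m` with domain `C₀^∞(ℝⁿ \ {0})` in `L²(ℝⁿ)`. -/
def negLapPowOp (m n : ℕ) :
    Lp ℂ 2 (volume : Measure (EuclideanSpace ℝ (Fin n))) →ₗ.[ℂ]
      Lp ℂ 2 (volume : Measure (EuclideanSpace ℝ (Fin n))) :=
  opOn n (fun φ => negLap^[m] φ)

open SchwartzMap FourierTransform InnerProductSpace

namespace LinearPMap

variable {H : Type*} [NormedAddCommGroup H] [InnerProductSpace ℂ H] [CompleteSpace H]

/-- A densely defined symmetric operator has a self-adjoint adjoint if and only if the adjoint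
is symmetric. -/
theorem isSelfAdjoint_adjoint_iff {T : H →ₗ.[ℂ] H} (hT : Dense (T.domain : Set H))
    (hs : T.IsFormalAdjoint T) :
    IsSelfAdjoint T.adjoint ↔ T.adjoint.IsFormalAdjoint T.adjoint := by
  have hle : T ≤ T.adjoint := hs.le_adjoint hT
  have hd : Dense (T.adjoint.domain : Set H) := hT.mono hle.1
  rw [LinearPMap.isSelfAdjoint_def]
  constructor
  · intro h
    have := adjoint_isFormalAdjoint hd
    rwa [h] at this
  · intro h
    refine le_antisymm ?_ (h.le_adjoint hd)
    refine IsFormalAdjoint.le_adjoint hT fun x y => ?_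
    have h1 := (adjoint_isFormalAdjoint hd).symm ⟨x, hle.1 x.2⟩ y
    rwa [← hle.2 (x := x) (y := ⟨x, hle.1 x.2⟩) rfl] at h1

end LinearPMap

/-- The negative Laplacian as a linear map on Schwartz functions. -/
def schwartzNegLap (n : ℕ) : Module.End ℂ 𝓢(EuclideanSpace ℝ (Fin n), ℂ) :=
  -(LineDeriv.laplacianCLM ℂ (EuclideanSpace ℝ (Fin n))
    𝓢(EuclideanSpace ℝ (Fin n), ℂ)).toLinearMap

theorem schwartzNegLap_apply {n : ℕ} (φ : 𝓢(EuclideanSpace ℝ (Fin n), ℂ)) :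
    schwartzNegLap n φ = -(Laplacian.laplacian φ) := by
  simp [schwartzNegLap]

theorem coe_schwartzNegLap {n : ℕ} (φ : 𝓢(EuclideanSpace ℝ (Fin n), ℂ)) :
    ⇑(schwartzNegLap n φ) = negLap ⇑φ := by
  ext x
  rw [schwartzNegLap_apply,
    SchwartzMap.laplacian_eq_sum (EuclideanSpace.basisFun (Fin n) ℝ)]
  simp [negLap, laplacian]
  rfl

theorem coe_schwartzNegLap_pow {n : ℕ} (m : ℕ) (φ : 𝓢(EuclideanSpace ℝ (Fin n), ℂ)) :
    ⇑((schwartzNegLap n ^ m) φ) = negLap^[m] ⇑φ := by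
  induction m generalizing φ with
  | zero => simp
  | succ m ih =>
    rw [pow_succ, Module.End.mul_apply, ih, coe_schwartzNegLap, Function.iterate_succ_apply]

theorem fourier_schwartzNegLap {n : ℕ} (φ : 𝓢(EuclideanSpace ℝ (Fin n), ℂ))
    (ξ : EuclideanSpace ℝ (Fin n)) :
    𝓕 (schwartzNegLap n φ) ξ = (((2 * Real.pi) ^ 2 * ‖ξ‖ ^ 2 : ℝ) : ℂ) * 𝓕 φ ξ := by
  have h : (fun x : EuclideanSpace ℝ (Fin n) => ‖x‖ ^ 2).HasTemperateGrowth := by fun_prop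
  rw [schwartzNegLap_apply, laplacian_eq_fourierMultiplierCLM, neg_smul, neg_neg,
    fourierMultiplierCLM_apply]
  set ψ := (smulLeftCLM ℂ ((‖·‖ ^ 2 : EuclideanSpace ℝ (Fin n) → ℝ))) (𝓕 φ) with hψ
  have hF : 𝓕 ((2 * Real.pi) ^ 2 • 𝓕⁻ ψ) = (2 * Real.pi) ^ 2 • ψ := by
    rw [← Complex.coe_smul, FourierTransform.fourier_smul,
      FourierTransform.fourier_fourierInv_eq, Complex.coe_smul]
  erw [hF]
  rw [_root_.smul_apply, hψ, smulLeftCLM_apply_apply h]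
  simp [mul_assoc]

/-- The symbol `(2π|ξ|)^{2m}` of `(-Δ)^m`. -/
def negLapSymbol (m n : ℕ) (ξ : EuclideanSpace ℝ (Fin n)) : ℝ :=
  ((2 * Real.pi) ^ 2 * ‖ξ‖ ^ 2) ^ m

theorem fourier_schwartzNegLap_pow {n : ℕ} (m : ℕ) (φ : 𝓢(EuclideanSpace ℝ (Fin n), ℂ))
    (ξ : EuclideanSpace ℝ (Fin n)) :
    𝓕 ((schwartzNegLap n ^ m) φ) ξ = (negLapSymbol m n ξ : ℂ) * 𝓕 φ ξ := by
  induction m with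
  | zero => simp [negLapSymbol]
  | succ m ih =>
    rw [pow_succ', Module.End.mul_apply, fourier_schwartzNegLap, ih, negLapSymbol, negLapSymbol]
    push_cast
    ring

/-- `(-Δ)^m` is symmetric on Schwartz functions. -/
theorem inner_schwartzNegLap_pow_comm {n : ℕ} (m : ℕ) (φ ψ : 𝓢(EuclideanSpace ℝ (Fin n), ℂ)) :
    inner ℂ (((schwartzNegLap n ^ m) φ).toLp 2) (ψ.toLp 2) =
      inner ℂ (φ.toLp 2) (((schwartzNegLap n ^ m) ψ).toLp 2) := by
  rw [← inner_fourier_toL2_eq, ← inner_fourier_toL2_eq φ, inner_toL2_toL2_eq _ _ volume,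
    inner_toL2_toL2_eq _ _ volume]
  congr 1 with ξ
  rw [fourier_schwartzNegLap_pow, fourier_schwartzNegLap_pow]
  simp
  ring

/-- Schwartz functions with compact support away from the origin. -/
def IsTestAwayZero {n : ℕ} (φ : 𝓢(EuclideanSpace ℝ (Fin n), ℂ)) : Prop :=
  HasCompactSupport φ ∧ (0 : EuclideanSpace ℝ (Fin n)) ∉ tsupport φ

theorem mem_graphOf_iff {m n : ℕ} (p : Lp ℂ 2 (volume : Measure (EuclideanSpace ℝ (Fin n))) ×
      Lp ℂ 2 (volume : Measure (EuclideanSpace ℝ (Fin n)))) :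
    p ∈ graphOf n (fun φ => negLap^[m] φ) ↔ ∃ φ : 𝓢(EuclideanSpace ℝ (Fin n), ℂ),
      IsTestAwayZero φ ∧ p.1 = φ.toLp 2 ∧ p.2 = ((schwartzNegLap n ^ m) φ).toLp 2 := by
  constructor
  · intro h
    induction h using Submodule.span_induction with
    | mem p hp =>
      obtain ⟨φ, hφ, hc, h0, h1, h2⟩ := hp
      refine ⟨hc.toSchwartzMap hφ, ⟨hc, h0⟩, ?_, ?_⟩
      · exact Lp.ext (h1.trans (coeFn_toLp (hc.toSchwartzMap hφ) 2 volume).symm)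
      · have h := coeFn_toLp ((schwartzNegLap n ^ m) (hc.toSchwartzMap hφ)) 2 volume
        rw [coe_schwartzNegLap_pow] at h
        exact Lp.ext (h2.trans h.symm)
    | zero =>
      refine ⟨0, ⟨HasCompactSupport.zero, ?_⟩, ?_, ?_⟩
      · rw [FunLike.coe_zero]
        simp
      · exact ((toLpCLM ℂ ℂ 2 volume).map_zero).symm
      · rw [map_zero]; exact ((toLpCLM ℂ ℂ 2 volume).map_zero).symm
    | add p q _ _ hp hq =>
      obtain ⟨φ, ⟨hc, h0⟩, h1, h2⟩ := hp
      obtain ⟨ψ, ⟨kc, k0⟩, k1, k2⟩ := hq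
      refine ⟨φ + ψ, ⟨hc.add kc, fun h => ?_⟩, ?_, ?_⟩
      · rcases tsupport_add φ ψ h with h | h
        exacts [h0 h, k0 h]
      · rw [Prod.fst_add, h1, k1]; exact ((toLpCLM ℂ ℂ 2 volume).map_add _ _).symm
      · rw [Prod.snd_add, h2, k2, map_add]; exact ((toLpCLM ℂ ℂ 2 volume).map_add _ _).symm
    | smul c p _ hp =>
      obtain ⟨φ, ⟨hc, h0⟩, h1, h2⟩ := hp
      refine ⟨c • φ, ⟨?_, fun h => h0 (closure_mono (Function.support_const_smul_subset c φ) h)⟩,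
        ?_, ?_⟩
      · exact hc.mono (Function.support_const_smul_subset c φ)
      · rw [Prod.smul_fst, h1]; exact ((toLpCLM ℂ ℂ 2 volume).map_smul _ _).symm
      · rw [Prod.smul_snd, h2, map_smul]; exact ((toLpCLM ℂ ℂ 2 volume).map_smul _ _).symm
  · rintro ⟨φ, ⟨hc, h0⟩, h1, h2⟩
    refine Submodule.subset_span ⟨φ, φ.smooth ⊤, hc, h0, ?_, ?_⟩
    · rw [h1]; exact coeFn_toLp _ _ _
    · have h := coeFn_toLp ((schwartzNegLap n ^ m) φ) 2 volume
      rw [coe_schwartzNegLap_pow] at h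
      rw [h2]
      exact h

theorem graph_negLapPowOp (m n : ℕ) :
    (negLapPowOp m n).graph = graphOf n (fun φ => negLap^[m] φ) := by
  refine Submodule.toLinearPMap_graph_eq _ fun p hp h => ?_
  obtain ⟨φ, -, h1, h2⟩ := (mem_graphOf_iff p).1 hp
  have : φ = 0 := by
    apply injective_toLp 2 volume
    change φ.toLp 2 volume = _
    rw [← h1, h]; exact ((toLpCLM ℂ ℂ 2 volume).map_zero).symm
  rw [h2, this, map_zero]
  exact (toLpCLM ℂ ℂ 2 volume).map_zero

theorem exists_of_mem_domain {m n : ℕ} (x : (negLapPowOp m n).domain) :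
    ∃ φ : 𝓢(EuclideanSpace ℝ (Fin n), ℂ), IsTestAwayZero φ ∧
      (x : Lp ℂ 2 (volume : Measure (EuclideanSpace ℝ (Fin n)))) = φ.toLp 2 ∧
      negLapPowOp m n x = ((schwartzNegLap n ^ m) φ).toLp 2 := by
  have := (negLapPowOp m n).mem_graph x
  rw [graph_negLapPowOp, mem_graphOf_iff] at this
  exact this

theorem IsTestAwayZero.exists_mem_domain {n : ℕ} (m : ℕ) {φ : 𝓢(EuclideanSpace ℝ (Fin n), ℂ)}
    (hφ : IsTestAwayZero φ) :
    ∃ x : (negLapPowOp m n).domain,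
      (x : Lp ℂ 2 (volume : Measure (EuclideanSpace ℝ (Fin n)))) = φ.toLp 2 ∧
      negLapPowOp m n x = ((schwartzNegLap n ^ m) φ).toLp 2 := by
  have : (φ.toLp 2 volume, ((schwartzNegLap n ^ m) φ).toLp 2 volume) ∈ (negLapPowOp m n).graph := by
    rw [graph_negLapPowOp, mem_graphOf_iff]
    exact ⟨φ, hφ, rfl, rfl⟩
  obtain ⟨y, h1, h2⟩ := (LinearPMap.mem_graph_iff _).1 this
  exact ⟨y, h1, h2⟩

theorem isFormalAdjoint_negLapPowOp (m n : ℕ) :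
    (negLapPowOp m n).IsFormalAdjoint (negLapPowOp m n) := by
  intro x y
  obtain ⟨φ, -, h1, h2⟩ := exists_of_mem_domain x
  obtain ⟨ψ, -, k1, k2⟩ := exists_of_mem_domain y
  rw [h1, h2, k1, k2, inner_schwartzNegLap_pow_comm]

theorem dense_domain_negLapPowOp (m n : ℕ) (hn : 1 ≤ n) :
    Dense ((negLapPowOp m n).domain :
      Set (Lp ℂ 2 (volume : Measure (EuclideanSpace ℝ (Fin n))))) := by
  have : Nonempty (Fin n) := ⟨⟨0, hn⟩⟩
  rw [Submodule.dense_iff_topologicalClosure_eq_top, Submodule.topologicalClosure_eq_top_iff,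
    Submodule.eq_bot_iff]
  intro u hu
  rw [Submodule.mem_orthogonal] at hu
  have hae : ∀ᵐ x ∂(volume : Measure (EuclideanSpace ℝ (Fin n))),
      x ∈ ({0}ᶜ : Set (EuclideanSpace ℝ (Fin n))) → u x = 0 := by
    refine isOpen_compl_singleton.ae_eq_zero_of_integral_contDiff_smul_eq_zero
      (((Lp.memLp u).locallyIntegrable (by norm_num)).locallyIntegrableOn _) fun g hg hgc hgs => ?_
    have hc : HasCompactSupport (fun x => (g x : ℂ)) := hgc.comp_left Complex.ofReal_zero
    have hd : ContDiff ℝ (⊤ : ℕ∞) (fun x => (g x : ℂ)) := Complex.ofRealCLM.contDiff.comp hg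
    have hs : tsupport (fun x => (g x : ℂ)) ⊆ tsupport g :=
      closure_mono (Function.support_comp_subset Complex.ofReal_zero g)
    obtain ⟨x, hx, -⟩ := IsTestAwayZero.exists_mem_domain m (φ := hc.toSchwartzMap hd)
      ⟨hc, fun h => hgs (hs h) rfl⟩
    have h := hu x x.2
    rw [hx, L2.inner_def] at h
    rw [← h]
    refine integral_congr_ae ?_
    filter_upwards [coeFn_toLp (hc.toSchwartzMap hd) 2 volume] with y hy
    rw [hy]
    change g y • u y = inner ℂ (g y : ℂ) (u y)
    simp [mul_comm]
  refine Lp.ext ?_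
  have h0 : ∀ᵐ x ∂(volume : Measure (EuclideanSpace ℝ (Fin n))), x ≠ 0 :=
    Measure.ae_ne volume 0
  filter_upwards [hae, h0, Lp.coeFn_zero ℂ 2 (volume : Measure (EuclideanSpace ℝ (Fin n)))]
    with x h1 h2 h3
  rw [h1 h2, h3]
  rfl

theorem inner_adjoint_of_isTestAwayZero {m n : ℕ} (hn : 1 ≤ n)
    (x : (negLapPowOp m n).adjoint.domain)
    {φ : 𝓢(EuclideanSpace ℝ (Fin n), ℂ)} (hφ : IsTestAwayZero φ) :
    inner ℂ ((negLapPowOp m n).adjoint x) (φ.toLp 2) =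
      inner ℂ (x : Lp ℂ 2 (volume : Measure (EuclideanSpace ℝ (Fin n))))
        (((schwartzNegLap n ^ m) φ).toLp 2) := by
  obtain ⟨y, h1, h2⟩ := hφ.exists_mem_domain m
  rw [← h1, ← h2]
  exact LinearPMap.adjoint_isFormalAdjoint (dense_domain_negLapPowOp m n hn) x y

theorem exists_adjoint_eq {m n : ℕ} (hn : 1 ≤ n)
    {u f : Lp ℂ 2 (volume : Measure (EuclideanSpace ℝ (Fin n)))}
    (h : ∀ φ : 𝓢(EuclideanSpace ℝ (Fin n), ℂ), IsTestAwayZero φ →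
      inner ℂ f (φ.toLp 2) = inner ℂ u (((schwartzNegLap n ^ m) φ).toLp 2)) :
    ∃ x : (negLapPowOp m n).adjoint.domain,
      (x : Lp ℂ 2 (volume : Measure (EuclideanSpace ℝ (Fin n)))) = u ∧
      (negLapPowOp m n).adjoint x = f := by
  have h' : ∀ y : (negLapPowOp m n).domain,
      inner ℂ f (y : Lp ℂ 2 (volume : Measure (EuclideanSpace ℝ (Fin n)))) =
        inner ℂ u (negLapPowOp m n y) := by
    intro y
    obtain ⟨φ, hφ, h1, h2⟩ := exists_of_mem_domain y
    rw [h1, h2, h φ hφ]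
  exact ⟨⟨u, LinearPMap.mem_adjoint_domain_of_exists u ⟨f, h'⟩⟩, rfl,
    LinearPMap.adjoint_apply_eq (dense_domain_negLapPowOp m n hn) _ h'⟩

theorem negLapSymbol_nonneg (m n : ℕ) (ξ : EuclideanSpace ℝ (Fin n)) : 0 ≤ negLapSymbol m n ξ := by
  unfold negLapSymbol; positivity

theorem continuous_negLapSymbol (m n : ℕ) : Continuous (negLapSymbol m n) := by
  unfold negLapSymbol; fun_prop

theorem norm_pow_le_negLapSymbol (m n : ℕ) (ξ : EuclideanSpace ℝ (Fin n)) :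
    ‖ξ‖ ^ (2 * m) ≤ negLapSymbol m n ξ := by
  rw [pow_mul, negLapSymbol]
  gcongr
  have : 1 ≤ (2 * Real.pi) ^ 2 := by
    have := Real.pi_gt_three
    nlinarith
  nlinarith [sq_nonneg ‖ξ‖]

/-- `(1 + |2πξ|^{2m})⁻¹` is square integrable when `n < 4m`. -/
theorem memLp_inv_one_add_negLapSymbol {m n : ℕ} (hmn : n < 4 * m) :
    MemLp (fun ξ => (((1 + negLapSymbol m n ξ)⁻¹ : ℝ) : ℂ)) 2
      (volume : Measure (EuclideanSpace ℝ (Fin n))) := by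
  have hpos : ∀ ξ, 0 < 1 + negLapSymbol m n ξ := fun ξ => by
    linarith [negLapSymbol_nonneg m n ξ]
  have hc : Continuous (fun ξ => (((1 + negLapSymbol m n ξ)⁻¹ : ℝ) : ℂ)) :=
    Complex.continuous_ofReal.comp
      ((continuous_const.add (continuous_negLapSymbol m n)).inv₀ fun ξ => (hpos ξ).ne')
  rw [memLp_two_iff_integrable_sq_norm hc.aestronglyMeasurable]
  have hi := integrable_one_add_norm (E := EuclideanSpace ℝ (Fin n)) (μ := volume)
    (r := (4 * m : ℕ)) (by rw [finrank_euclideanSpace_fin]; exact_mod_cast hmn)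
  refine (hi.const_mul ((2 : ℝ) ^ (4 * m))).mono'
    (hc.norm.pow 2).aestronglyMeasurable (Filter.Eventually.of_forall fun ξ => ?_)
  rw [Real.rpow_neg (by positivity), Real.rpow_natCast, Real.norm_of_nonneg (by positivity),
    Complex.norm_real, Real.norm_of_nonneg (inv_nonneg.2 (hpos ξ).le), inv_pow,
    inv_le_iff_one_le_mul₀ (pow_pos (hpos ξ) 2), ← div_eq_mul_inv, div_mul_eq_mul_div,
    one_le_div (by positivity)]
  have h1 : (1 + ‖ξ‖) ^ (2 * m) ≤ 2 ^ (2 * m) * (1 + negLapSymbol m n ξ) := by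
    calc (1 + ‖ξ‖) ^ (2 * m) ≤ 2 ^ (2 * m - 1) * (1 ^ (2 * m) + ‖ξ‖ ^ (2 * m)) :=
          add_pow_le zero_le_one (norm_nonneg _) _
      _ ≤ 2 ^ (2 * m) * (1 + negLapSymbol m n ξ) := by
          rw [one_pow]
          have := norm_pow_le_negLapSymbol m n ξ
          gcongr
          · norm_num
          · omega
  calc (1 + ‖ξ‖) ^ (4 * m) = ((1 + ‖ξ‖) ^ (2 * m)) ^ 2 := by rw [← pow_mul]; congr 1; ring
    _ ≤ (2 ^ (2 * m) * (1 + negLapSymbol m n ξ)) ^ 2 := by gcongr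
    _ = 2 ^ (4 * m) * (1 + negLapSymbol m n ξ) ^ 2 := by
        rw [mul_pow, ← pow_mul]; congr 2; ring

/-- The fundamental solution of `(-Δ)^m + 1` lies in `L²` when `n < 4m`. -/
theorem exists_fundamental_solution {m n : ℕ} (hmn : n < 4 * m) :
    ∃ u : Lp ℂ 2 (volume : Measure (EuclideanSpace ℝ (Fin n))),
      ∀ φ : 𝓢(EuclideanSpace ℝ (Fin n), ℂ),
        inner ℂ u (((schwartzNegLap n ^ m) φ).toLp 2) = φ 0 - inner ℂ u (φ.toLp 2) := by
  have hw := memLp_inv_one_add_negLapSymbol hmn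
  refine ⟨𝓕⁻ hw.toLp, fun φ => ?_⟩
  have key : ∀ ψ : 𝓢(EuclideanSpace ℝ (Fin n), ℂ),
      inner ℂ (𝓕⁻ hw.toLp : Lp ℂ 2 (volume : Measure (EuclideanSpace ℝ (Fin n)))) (ψ.toLp 2) =
        ∫ ξ, (((1 + negLapSymbol m n ξ)⁻¹ : ℝ) : ℂ) * 𝓕 ψ ξ := by
    intro ψ
    rw [← Lp.inner_fourier_eq, fourier_fourierInv_eq, toLp_fourier_eq, L2.inner_def]
    refine integral_congr_ae ?_
    filter_upwards [hw.coeFn_toLp, coeFn_toLp (𝓕 ψ) 2 volume] with ξ h1 h2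
    rw [h1, h2]
    simp [mul_comm]
  have hint : Integrable (fun ξ => (((1 + negLapSymbol m n ξ)⁻¹ : ℝ) : ℂ) * 𝓕 φ ξ) :=
    hw.integrable_mul ((𝓕 φ).memLp 2 volume)
  have h0 : φ 0 = ∫ ξ, 𝓕 φ ξ := by
    have h : 𝓕⁻ (𝓕 φ) = φ := fourierInv_fourier_eq φ
    conv_lhs => rw [← h, fourierInv_coe, Real.fourierInv_eq]
    simp
  rw [key, key, h0, ← integral_sub (𝓕 φ).integrable hint]
  congr 1 with ξ
  rw [fourier_schwartzNegLap_pow]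
  have : (1 + negLapSymbol m n ξ : ℂ) ≠ 0 := by
    have := negLapSymbol_nonneg m n ξ
    exact_mod_cast (by linarith : 1 + negLapSymbol m n ξ ≠ 0)
  push_cast
  field_simp
  ring

theorem not_isFormalAdjoint_adjoint {m n : ℕ} (hn : 1 ≤ n) (hmn : n < 4 * m) :
    ¬ (negLapPowOp m n).adjoint.IsFormalAdjoint (negLapPowOp m n).adjoint := by
  intro h
  obtain ⟨u, hu⟩ := exists_fundamental_solution hmn
  obtain ⟨x, hx, hx'⟩ := exists_adjoint_eq (m := m) hn (u := u) (f := -u) fun φ hφ => by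
    rw [hu φ, image_eq_zero_of_notMem_tsupport hφ.2, zero_sub, inner_neg_left]
  let b : ContDiffBump (0 : EuclideanSpace ℝ (Fin n)) := default
  have hc : HasCompactSupport (fun x => (b x : ℂ)) :=
    b.hasCompactSupport.comp_left Complex.ofReal_zero
  have hd : ContDiff ℝ (⊤ : ℕ∞) (fun x => (b x : ℂ)) := Complex.ofRealCLM.contDiff.comp b.contDiff
  set v := hc.toSchwartzMap hd
  have hv0 : v 0 = 1 := by
    change ((b 0 : ℝ) : ℂ) = 1
    rw [b.one_of_mem_closedBall (Metric.mem_closedBall_self b.rIn_pos.le), Complex.ofReal_one]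
  obtain ⟨y, hy, hy'⟩ := exists_adjoint_eq (m := m) hn (u := v.toLp 2)
    (f := ((schwartzNegLap n ^ m) v).toLp 2) fun φ _ => inner_schwartzNegLap_pow_comm m v φ
  have := h x y
  rw [hx, hx', hy, hy', hu, inner_neg_left, hv0] at this
  exact one_ne_zero (α := ℂ) (by linear_combination -this)

theorem norm_iteratedFDeriv_schwartzNegLap_le {n : ℕ} (j : ℕ) (φ : 𝓢(EuclideanSpace ℝ (Fin n), ℂ))
    (x : EuclideanSpace ℝ (Fin n)) :
    ‖iteratedFDeriv ℝ j (schwartzNegLap n φ) x‖ ≤ n * ‖iteratedFDeriv ℝ (j + 2) φ x‖ := by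
  set e := EuclideanSpace.basisFun (Fin n) ℝ
  have hd : ∀ (ψ : 𝓢(EuclideanSpace ℝ (Fin n), ℂ)) (k : ℕ) (i : Fin n),
      ‖iteratedFDeriv ℝ k (fun y => fderiv ℝ ψ y (e i)) x‖ ≤ ‖iteratedFDeriv ℝ (k + 1) ψ x‖ := by
    intro ψ k i
    refine (norm_iteratedFDeriv_clm_apply_const (N := (k : ℕ∞))
      ((ψ.smooth (k + 1)).fderiv_right le_rfl).contDiffAt le_rfl).trans ?_
    rw [e.norm_eq_one, one_mul, norm_iteratedFDeriv_fderiv]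
  have hsum : ⇑(schwartzNegLap n φ) =
      fun y => -∑ i, fderiv ℝ (LineDeriv.lineDerivOp (e i) φ) y (e i) := by
    ext y
    rw [schwartzNegLap_apply, SchwartzMap.laplacian_eq_sum e]
    simp
    rfl
  have hs : ∀ (ψ : 𝓢(EuclideanSpace ℝ (Fin n), ℂ)) (i : Fin n),
      ContDiff ℝ j (fun y => fderiv ℝ ψ y (e i)) := fun ψ i =>
    ((ψ.smooth (j + 1)).fderiv_right le_rfl).clm_apply contDiff_const
  rw [hsum, show (fun y => -∑ i, fderiv ℝ (LineDeriv.lineDerivOp (e i) φ) y (e i)) =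
    -(fun y => ∑ i, fderiv ℝ (LineDeriv.lineDerivOp (e i) φ) y (e i)) from rfl,
    iteratedFDeriv_neg_apply, norm_neg, iteratedFDeriv_fun_sum_apply fun i _ => (hs _ i).contDiffAt]
  refine (norm_sum_le _ _).trans ?_
  refine (Finset.sum_le_card_nsmul _ _ (‖iteratedFDeriv ℝ (j + 2) φ x‖) fun i _ => ?_).trans
    (by simp)
  exact (hd (LineDeriv.lineDerivOp (e i) φ) j i).trans (hd φ (j + 1) i)

theorem norm_schwartzNegLap_pow_le {n : ℕ} (m : ℕ) (φ : 𝓢(EuclideanSpace ℝ (Fin n), ℂ))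
    (x : EuclideanSpace ℝ (Fin n)) :
    ‖(schwartzNegLap n ^ m) φ x‖ ≤ n ^ m * ‖iteratedFDeriv ℝ (2 * m) φ x‖ := by
  induction m generalizing φ with
  | zero => simp
  | succ m ih =>
    rw [pow_succ, Module.End.mul_apply]
    refine (ih _).trans ?_
    rw [pow_succ (n : ℝ), mul_assoc]
    gcongr
    exact norm_iteratedFDeriv_schwartzNegLap_le _ φ x

/-- Powers of the Laplacian are local. -/
theorem schwartzNegLap_pow_congr {n : ℕ} (m : ℕ) {φ ψ : 𝓢(EuclideanSpace ℝ (Fin n), ℂ)}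
    {x : EuclideanSpace ℝ (Fin n)} (h : φ =ᶠ[nhds x] ψ) :
    (schwartzNegLap n ^ m) φ x = (schwartzNegLap n ^ m) ψ x := by
  have h0 : ⇑(φ - ψ) =ᶠ[nhds x] fun _ => 0 := by
    filter_upwards [h] with y hy
    simp [hy]
  have h1 := norm_schwartzNegLap_pow_le m (φ - ψ) x
  rw [(h0.iteratedFDeriv ℝ (2 * m)).eq_of_nhds] at h1
  simpa [sub_eq_zero] using h1

/-- A smooth cutoff function, equal to `1` near the origin. -/
def cutoffFun (n : ℕ) : 𝓢(EuclideanSpace ℝ (Fin n), ℂ) :=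
  (HasCompactSupport.comp_left
    (⟨1, 2, one_pos, one_lt_two⟩ : ContDiffBump (0 : EuclideanSpace ℝ (Fin n))).hasCompactSupport
    Complex.ofReal_zero).toSchwartzMap (Complex.ofRealCLM.contDiff.comp (ContDiffBump.contDiff _))

theorem cutoffFun_eq_one {n : ℕ} {x : EuclideanSpace ℝ (Fin n)} (hx : ‖x‖ ≤ 1) :
    cutoffFun n x = 1 := by
  change ((ContDiffBump.toFun _ x : ℝ) : ℂ) = 1
  rw [ContDiffBump.one_of_mem_closedBall _ (by simpa using hx), Complex.ofReal_one]

theorem cutoffFun_eq_zero {n : ℕ} {x : EuclideanSpace ℝ (Fin n)} (hx : 2 ≤ ‖x‖) :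
    cutoffFun n x = 0 := by
  change ((ContDiffBump.toFun _ x : ℝ) : ℂ) = 0
  rw [ContDiffBump.zero_of_le_dist _ (by simpa using hx), Complex.ofReal_zero]

/-- Multiplication by the cutoff function rescaled by `t`. -/
def cutoff {n : ℕ} (t : ℝ) (φ : 𝓢(EuclideanSpace ℝ (Fin n), ℂ)) : 𝓢(EuclideanSpace ℝ (Fin n), ℂ) :=
  smulLeftCLM ℂ (fun x => cutoffFun n (t • x)) φ

theorem cutoff_apply {n : ℕ} (t : ℝ) (φ : 𝓢(EuclideanSpace ℝ (Fin n), ℂ))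
    (x : EuclideanSpace ℝ (Fin n)) : cutoff t φ x = cutoffFun n (t • x) * φ x := by
  have h : (fun x : EuclideanSpace ℝ (Fin n) => t • x).HasTemperateGrowth := by fun_prop
  have hg : (fun x : EuclideanSpace ℝ (Fin n) => cutoffFun n (t • x)).HasTemperateGrowth :=
    (cutoffFun n).hasTemperateGrowth.comp h
  rw [cutoff, smulLeftCLM_apply_apply hg, smul_eq_mul]

theorem exists_norm_schwartzNegLap_pow_cutoff_le {n : ℕ} (m N : ℕ)
    (φ : 𝓢(EuclideanSpace ℝ (Fin n), ℂ)) :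
    ∃ C : ℝ, 0 ≤ C ∧ ∀ (t : ℝ), 0 ≤ t → ∀ x,
      (1 + ‖x‖) ^ N * ‖(schwartzNegLap n ^ m) (cutoff t φ) x‖ ≤ C * (max 1 t) ^ (2 * m) := by
  have hbound : ∀ (N : ℕ) (ψ : 𝓢(EuclideanSpace ℝ (Fin n), ℂ)), ∃ A : ℝ, 0 ≤ A ∧
      ∀ i ≤ 2 * m, ∀ x, (1 + ‖x‖) ^ N * ‖iteratedFDeriv ℝ i ψ x‖ ≤ A := fun N ψ =>
    ⟨_, by positivity, fun i hi x =>
      one_add_le_sup_seminorm_apply (𝕜 := ℂ) (m := (N, 2 * m)) le_rfl hi ψ x⟩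
  obtain ⟨A, hA0, hA⟩ := hbound 0 (cutoffFun n)
  obtain ⟨B, hB0, hB⟩ := hbound N φ
  simp only [pow_zero, one_mul] at hA
  refine ⟨n ^ m * ∑ i ∈ Finset.range (2 * m + 1), ((2 * m).choose i : ℝ) * A * B,
    by positivity, fun t ht x => ?_⟩
  have hg : ContDiff ℝ (2 * m : ℕ) (fun x : EuclideanSpace ℝ (Fin n) => cutoffFun n (t • x)) :=
    ((cutoffFun n).smooth _).comp (contDiff_const_smul t)
  have hmul := norm_iteratedFDeriv_mul_le hg (φ.smooth (2 * m : ℕ)) x le_rfl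
  have hfun : ⇑(cutoff t φ) = fun x => cutoffFun n (t • x) * φ x := funext (cutoff_apply t φ)
  have h1 := norm_schwartzNegLap_pow_le m (cutoff t φ) x
  rw [hfun] at h1
  calc (1 + ‖x‖) ^ N * ‖(schwartzNegLap n ^ m) (cutoff t φ) x‖
      ≤ (1 + ‖x‖) ^ N * (n ^ m * ∑ i ∈ Finset.range (2 * m + 1), ((2 * m).choose i : ℝ) *
        ‖iteratedFDeriv ℝ i (fun x : EuclideanSpace ℝ (Fin n) => cutoffFun n (t • x)) x‖ *
        ‖iteratedFDeriv ℝ (2 * m - i) φ x‖) := by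
        gcongr
        exact h1.trans (by gcongr)
    _ = n ^ m * ∑ i ∈ Finset.range (2 * m + 1), ((2 * m).choose i : ℝ) *
        ‖iteratedFDeriv ℝ i (fun x : EuclideanSpace ℝ (Fin n) => cutoffFun n (t • x)) x‖ *
        ((1 + ‖x‖) ^ N * ‖iteratedFDeriv ℝ (2 * m - i) φ x‖) := by
        rw [mul_left_comm, Finset.mul_sum]
        congr 1
        exact Finset.sum_congr rfl fun i _ => by ring
    _ ≤ n ^ m * ∑ i ∈ Finset.range (2 * m + 1), ((2 * m).choose i : ℝ) *
        (A * (max 1 t) ^ (2 * m)) * B := by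
        gcongr with i hi
        · rw [iteratedFDeriv_comp_const_smul t ((cutoffFun n).smooth i), norm_smul, mul_comm A,
            norm_pow, Real.norm_of_nonneg ht]
          have hi' : i ≤ 2 * m := Nat.lt_succ_iff.1 (Finset.mem_range.1 hi)
          gcongr
          · calc t ^ i ≤ (max 1 t) ^ i := by gcongr; exact le_max_right _ _
              _ ≤ (max 1 t) ^ (2 * m) := pow_le_pow_right₀ (le_max_left _ _) hi'
          · exact hA i hi' _
        · exact hB _ (Nat.sub_le _ _) _
    _ = _ := by
        rw [mul_assoc (_ ^ m), Finset.sum_mul]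
        congr 1
        exact Finset.sum_congr rfl fun i _ => by ring

theorem inner_toLp_eq_integral {n : ℕ} (u : Lp ℂ 2 (volume : Measure (EuclideanSpace ℝ (Fin n))))
    (φ : 𝓢(EuclideanSpace ℝ (Fin n), ℂ)) :
    inner ℂ u (φ.toLp 2 volume) = ∫ x, inner ℂ (u x) (φ x) := by
  rw [L2.inner_def]
  refine integral_congr_ae ?_
  filter_upwards [coeFn_toLp φ 2 volume] with x hx
  rw [hx]

/-- Removing the cutoff at infinity. -/
theorem tendsto_inner_schwartzNegLap_pow_cutoff_zero {n : ℕ} (m : ℕ)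
    (u : Lp ℂ 2 (volume : Measure (EuclideanSpace ℝ (Fin n))))
    (φ : 𝓢(EuclideanSpace ℝ (Fin n), ℂ)) :
    Filter.Tendsto (fun t : ℝ => inner ℂ u (((schwartzNegLap n ^ m) (cutoff t φ)).toLp 2 volume))
      (nhdsWithin 0 (Set.Ioi 0)) (nhds (inner ℂ u (((schwartzNegLap n ^ m) φ).toLp 2 volume))) := by
  simp only [inner_toLp_eq_integral]
  obtain ⟨C, hC0, hC⟩ := exists_norm_schwartzNegLap_pow_cutoff_le m (n + 1) φ
  have hw : MemLp (fun x : EuclideanSpace ℝ (Fin n) => ((1 + ‖x‖) ^ (n + 1))⁻¹) 2 volume := by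
    have hc : Continuous (fun x : EuclideanSpace ℝ (Fin n) => ((1 + ‖x‖) ^ (n + 1))⁻¹) :=
      ((continuous_const.add continuous_norm).pow _).inv₀ fun x =>
        (by positivity : (0 : ℝ) < (1 + ‖x‖) ^ (n + 1)).ne'
    rw [memLp_two_iff_integrable_sq_norm hc.aestronglyMeasurable]
    have hi := integrable_one_add_norm (E := EuclideanSpace ℝ (Fin n)) (μ := volume)
      (r := (2 * (n + 1) : ℕ)) (by rw [finrank_euclideanSpace_fin]; norm_cast; omega)
    refine hi.congr (Filter.Eventually.of_forall fun x => ?_)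
    simp only
    rw [Real.rpow_neg (by positivity), Real.rpow_natCast, Real.norm_of_nonneg (by positivity),
      inv_pow, ← pow_mul, mul_comm]
  refine tendsto_integral_filter_of_dominated_convergence
    (fun x => C * (‖u x‖ * ((1 + ‖x‖) ^ (n + 1))⁻¹)) ?_ ?_ ?_ ?_
  · exact Filter.Eventually.of_forall fun t => (Lp.aestronglyMeasurable u).inner
      (SchwartzMap.continuous _).aestronglyMeasurable
  · filter_upwards [Ioc_mem_nhdsGT one_pos] with t ht
    refine Filter.Eventually.of_forall fun x => (norm_inner_le_norm _ _).trans ?_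
    rw [mul_left_comm]
    gcongr
    have := hC t ht.1.le x
    rw [max_eq_left ht.2, one_pow, mul_one] at this
    rw [← div_eq_mul_inv, le_div_iff₀ (by positivity), mul_comm]
    exact this
  · exact ((Lp.memLp u).norm.integrable_mul hw).const_mul C
  · refine Filter.Eventually.of_forall fun x => tendsto_const_nhds.congr' ?_
    have hx : (0 : ℝ) < (‖x‖ + 1)⁻¹ := by positivity
    filter_upwards [Ioc_mem_nhdsGT hx] with t ht
    congr 1
    refine schwartzNegLap_pow_congr m ?_
    have hball : Metric.ball x 1 ∈ nhds x := Metric.ball_mem_nhds x one_pos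
    filter_upwards [hball] with y hy
    have hy' : ‖y‖ ≤ ‖x‖ + 1 := by
      have := norm_le_norm_add_norm_sub x y
      rw [Metric.mem_ball, dist_eq_norm, ← norm_neg, neg_sub] at hy
      linarith
    rw [cutoff_apply, cutoffFun_eq_one, one_mul]
    rw [norm_smul, Real.norm_of_nonneg ht.1.le]
    calc t * ‖y‖ ≤ (‖x‖ + 1)⁻¹ * (‖x‖ + 1) := mul_le_mul ht.2 hy' (norm_nonneg _) hx.le
      _ = 1 := inv_mul_cancel₀ (by positivity)

/-- Shrinking the cutoff to the origin, in dimension `n ≥ 4m`. -/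
theorem tendsto_inner_schwartzNegLap_pow_cutoff_atTop {m n : ℕ} (hn : 1 ≤ n) (hmn : 4 * m ≤ n)
    (u : Lp ℂ 2 (volume : Measure (EuclideanSpace ℝ (Fin n))))
    (φ : 𝓢(EuclideanSpace ℝ (Fin n), ℂ)) :
    Filter.Tendsto (fun t : ℝ => inner ℂ u (((schwartzNegLap n ^ m) (cutoff t φ)).toLp 2 volume))
      Filter.atTop (nhds 0) := by
  have : Nonempty (Fin n) := ⟨⟨0, hn⟩⟩
  obtain ⟨C, hC0, hC⟩ := exists_norm_schwartzNegLap_pow_cutoff_le m 0 φ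
  set V : ℝ := volume.real (Metric.ball (0 : EuclideanSpace ℝ (Fin n)) 1)
  have hu : Integrable (fun x => ‖u x‖ ^ 2) volume :=
    (memLp_two_iff_integrable_sq_norm (Lp.aestronglyMeasurable u)).1 (Lp.memLp u)
  have hmass : Filter.Tendsto (fun t : ℝ => ∫ x in Metric.closedBall 0 (2 / t), ‖u x‖ ^ 2)
      Filter.atTop (nhds 0) := by
    have h := tendsto_integral_filter_of_dominated_convergence (μ := volume) (l := Filter.atTop)
      (F := fun (t : ℝ) x => (Metric.closedBall (0 : EuclideanSpace ℝ (Fin n)) (2 / t)).indicator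
        (fun x => ‖u x‖ ^ 2) x) (f := fun _ => (0 : ℝ)) (fun x => ‖u x‖ ^ 2) ?_ ?_ hu ?_
    · simpa only [integral_indicator Metric.isClosed_closedBall.measurableSet, integral_zero]
        using h
    · exact Filter.Eventually.of_forall fun t =>
        hu.aestronglyMeasurable.indicator Metric.isClosed_closedBall.measurableSet
    · refine Filter.Eventually.of_forall fun t => Filter.Eventually.of_forall fun x => ?_
      refine (norm_indicator_le_norm_self _ _).trans ?_
      rw [Real.norm_of_nonneg (by positivity)]
    · filter_upwards [Measure.ae_ne volume (0 : EuclideanSpace ℝ (Fin n))] with x hx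
      refine tendsto_const_nhds.congr' ?_
      have hlim : Filter.Tendsto (fun t : ℝ => 2 / t) Filter.atTop (nhds 0) :=
        tendsto_const_nhds.div_atTop Filter.tendsto_id
      filter_upwards [hlim.eventually_lt_const (norm_pos_iff.2 hx)] with t ht
      rw [Set.indicator_of_notMem]
      simpa using ht
  have hlim : Filter.Tendsto (fun t : ℝ => √(∫ x in Metric.closedBall 0 (2 / t), ‖u x‖ ^ 2) *
      (C * √(2 ^ n * V))) Filter.atTop (nhds 0) := by
    simpa using hmass.sqrt.mul_const (C * √(2 ^ n * V))
  refine squeeze_zero_norm' ?_ hlim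
  filter_upwards [Filter.eventually_ge_atTop 1] with t ht
  have ht0 : 0 < t := by linarith
  set h := (schwartzNegLap n ^ m) (cutoff t φ)
  set S := Metric.closedBall (0 : EuclideanSpace ℝ (Fin n)) (2 / t)
  have : IsFiniteMeasure (volume.restrict S) :=
    ⟨by simpa using measure_closedBall_lt_top⟩
  have hsupp : ∀ x ∉ S, h x = 0 := by
    intro x hx
    have : h x = (schwartzNegLap n ^ m) (0 : 𝓢(EuclideanSpace ℝ (Fin n), ℂ)) x := by
      refine schwartzNegLap_pow_congr m ?_
      filter_upwards [Metric.isClosed_closedBall.isOpen_compl.mem_nhds hx] with y hy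
      rw [cutoff_apply, cutoffFun_eq_zero, zero_mul]
      · rfl
      · rw [norm_smul, Real.norm_of_nonneg ht0.le]
        rw [Set.mem_compl_iff, mem_closedBall_zero_iff, not_le, div_lt_iff₀ ht0] at hy
        linarith
    rw [this, map_zero]
    rfl
  have hbd : ∀ x, ‖h x‖ ≤ C * t ^ (2 * m) := fun x => by
    have := hC t ht0.le x
    rwa [max_eq_right ht, pow_zero, one_mul] at this
  have hle : ‖inner ℂ u (h.toLp 2 volume)‖ ≤ ∫ x in S, ‖u x‖ * (C * t ^ (2 * m)) := by
    rw [inner_toLp_eq_integral, ← setIntegral_eq_integral_of_forall_compl_eq_zero (s := S)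
      fun x hx => by rw [hsupp x hx, inner_zero_right]]
    refine norm_integral_le_of_norm_le ?_ (Filter.Eventually.of_forall fun x => ?_)
    · exact (((Lp.memLp u).restrict S).norm.integrable_mul
        (memLp_const (μ := volume.restrict S) (p := 2) (C * t ^ (2 * m))))
    · exact (norm_inner_le_norm _ _).trans (by gcongr; exact hbd x)
  have hK : 0 ≤ C * t ^ (2 * m) := by positivity
  have hcs := integral_mul_le_Lp_mul_Lq_of_nonneg (μ := volume.restrict S) (p := 2) (q := 2)
    (f := fun x => ‖u x‖) (g := fun _ => C * t ^ (2 * m)) (Real.HolderConjugate.two_two)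
    (Filter.Eventually.of_forall fun x => norm_nonneg _)
    (Filter.Eventually.of_forall fun x => hK)
    (by simpa using ((Lp.memLp u).restrict S).norm)
    (memLp_const _)
  simp only [Real.rpow_ofNat, ← Real.sqrt_eq_rpow, setIntegral_const, smul_eq_mul] at hcs
  refine hle.trans (hcs.trans ?_)
  gcongr
  rw [Measure.addHaar_real_closedBall _ _ (by positivity), finrank_euclideanSpace_fin]
  refine Real.sqrt_le_iff.2 ⟨by positivity, ?_⟩
  rw [mul_pow C (√_), Real.sq_sqrt (by positivity)]
  have hpow : (t ^ (2 * m)) ^ 2 ≤ t ^ n := by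
    rw [← pow_mul]
    exact pow_le_pow_right₀ ht (by omega)
  calc (2 / t) ^ n * V * (C * t ^ (2 * m)) ^ 2
      = C ^ 2 * (2 ^ n * V) * ((t ^ (2 * m)) ^ 2 / t ^ n) := by
        rw [div_pow]; ring
    _ ≤ C ^ 2 * (2 ^ n * V) * 1 := by
        gcongr
        exact (div_le_one (by positivity)).2 hpow
    _ = C ^ 2 * (2 ^ n * V) := mul_one _

/-- In dimension `n ≥ 4m`, a weak solution of `(-Δ)^m u = f` away from the origin is a weak
solution on the whole space. -/
theorem inner_eq_inner_schwartzNegLap_pow {m n : ℕ} (hn : 1 ≤ n) (hmn : 4 * m ≤ n)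
    {u f : Lp ℂ 2 (volume : Measure (EuclideanSpace ℝ (Fin n)))}
    (h : ∀ φ : 𝓢(EuclideanSpace ℝ (Fin n), ℂ), IsTestAwayZero φ →
      inner ℂ f (φ.toLp 2) = inner ℂ u (((schwartzNegLap n ^ m) φ).toLp 2))
    (φ : 𝓢(EuclideanSpace ℝ (Fin n), ℂ)) :
    inner ℂ f (φ.toLp 2 volume) = inner ℂ u (((schwartzNegLap n ^ m) φ).toLp 2 volume) := by
  have hcpt : ∀ ψ : 𝓢(EuclideanSpace ℝ (Fin n), ℂ), HasCompactSupport ψ →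
      inner ℂ f (ψ.toLp 2 volume) = inner ℂ u (((schwartzNegLap n ^ m) ψ).toLp 2 volume) := by
    intro ψ hψ
    have hev : ∀ t : ℝ, inner ℂ f (ψ.toLp 2 volume) - inner ℂ f ((cutoff t ψ).toLp 2 volume) =
        inner ℂ u (((schwartzNegLap n ^ m) ψ).toLp 2 volume) -
          inner ℂ u (((schwartzNegLap n ^ m) (cutoff t ψ)).toLp 2 volume) := by
      intro t
      have hsub : ∀ a b : 𝓢(EuclideanSpace ℝ (Fin n), ℂ),
          (a - b).toLp 2 volume = a.toLp 2 volume - b.toLp 2 volume :=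
        (toLpCLM ℂ ℂ 2 volume).map_sub
      rw [← inner_sub_right, ← inner_sub_right, ← hsub, ← hsub, ← map_sub]
      refine h _ ⟨?_, ?_⟩
      · refine hψ.mono fun x hx => ?_
        contrapose! hx
        simp_all [cutoff_apply]
      · rw [notMem_tsupport_iff_eventuallyEq]
        have hc : Continuous (fun x : EuclideanSpace ℝ (Fin n) => ‖t • x‖) := by fun_prop
        have h0 := hc.tendsto 0
        simp only [smul_zero, norm_zero] at h0
        filter_upwards [h0.eventually_le_const one_pos] with x hx
        simp [cutoff_apply, cutoffFun_eq_one hx]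
    have h1 := (tendsto_inner_schwartzNegLap_pow_cutoff_atTop
      (m := 0) hn (Nat.zero_le n) f ψ).const_sub (inner ℂ f (ψ.toLp 2 volume))
    have h2 := (tendsto_inner_schwartzNegLap_pow_cutoff_atTop hn hmn u ψ).const_sub
      (inner ℂ u (((schwartzNegLap n ^ m) ψ).toLp 2 volume))
    simp only [pow_zero, Module.End.one_apply, sub_zero, hev] at h1 h2
    exact tendsto_nhds_unique h1 h2
  have h1 := tendsto_inner_schwartzNegLap_pow_cutoff_zero 0 f φ
  have h2 := tendsto_inner_schwartzNegLap_pow_cutoff_zero m u φ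
  simp only [pow_zero, Module.End.one_apply] at h1
  refine tendsto_nhds_unique h1 (h2.congr' ?_)
  filter_upwards [self_mem_nhdsWithin] with t ht
  refine (hcpt _ ?_).symm
  have ht : (0 : ℝ) < t := ht
  refine HasCompactSupport.intro (isCompact_closedBall 0 (2 / t)) fun x hx => ?_
  rw [cutoff_apply, cutoffFun_eq_zero, zero_mul]
  rw [mem_closedBall_zero_iff, not_le, div_lt_iff₀ ht] at hx
  rw [norm_smul, Real.norm_of_nonneg ht.le]
  linarith

/-- If `(-Δ)^m u = f` weakly, then the Fourier transforms are related by the symbol. -/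
theorem fourier_ae_eq_negLapSymbol_mul {m n : ℕ}
    {u f : Lp ℂ 2 (volume : Measure (EuclideanSpace ℝ (Fin n)))}
    (h : ∀ φ : 𝓢(EuclideanSpace ℝ (Fin n), ℂ),
      inner ℂ f (φ.toLp 2 volume) = inner ℂ u (((schwartzNegLap n ^ m) φ).toLp 2 volume)) :
    ((𝓕 f : Lp ℂ 2 (volume : Measure (EuclideanSpace ℝ (Fin n)))) : EuclideanSpace ℝ (Fin n) → ℂ)
      =ᵐ[volume] fun ξ => (negLapSymbol m n ξ : ℂ) *
        (𝓕 u : Lp ℂ 2 (volume : Measure (EuclideanSpace ℝ (Fin n)))) ξ := by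
  have hloc : ∀ w : Lp ℂ 2 (volume : Measure (EuclideanSpace ℝ (Fin n))),
      LocallyIntegrable w volume := fun w => (Lp.memLp w).locallyIntegrable (by norm_num)
  have hsym : Continuous (fun ξ => (negLapSymbol m n ξ : ℂ)) :=
    Complex.continuous_ofReal.comp (continuous_negLapSymbol m n)
  refine ae_eq_of_integral_contDiff_smul_eq (hloc _) ?_ fun g hg hgc => ?_
  · rw [← locallyIntegrableOn_univ]
    exact (locallyIntegrableOn_univ.2 (hloc (𝓕 u))).continuousOn_mul hsym.continuousOn
      isOpen_univ.isLocallyClosed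
  have hd : ContDiff ℝ (⊤ : ℕ∞) (fun x => (g x : ℂ)) := Complex.ofRealCLM.contDiff.comp hg
  set G : 𝓢(EuclideanSpace ℝ (Fin n), ℂ) :=
    (hgc.comp_left Complex.ofReal_zero).toSchwartzMap hd
  have hGa : ∀ ξ, G ξ = (g ξ : ℂ) := fun ξ => rfl
  have hGF : 𝓕 (𝓕⁻ G) = G := fourier_fourierInv_eq G
  have key := h (𝓕⁻ G)
  rw [← Lp.inner_fourier_eq, ← Lp.inner_fourier_eq u, toLp_fourier_eq, toLp_fourier_eq, hGF,
    inner_toLp_eq_integral, inner_toLp_eq_integral] at key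
  simp only [fourier_schwartzNegLap_pow, hGF, hGa] at key
  have key' := congrArg (starRingEnd ℂ) key
  rw [← integral_conj, ← integral_conj] at key'
  simpa [mul_comm, mul_left_comm, mul_assoc] using key'

theorem inner_eq_inner_of_weak_solution {m n : ℕ}
    {u f v g : Lp ℂ 2 (volume : Measure (EuclideanSpace ℝ (Fin n)))}
    (hu : ∀ φ : 𝓢(EuclideanSpace ℝ (Fin n), ℂ),
      inner ℂ f (φ.toLp 2 volume) = inner ℂ u (((schwartzNegLap n ^ m) φ).toLp 2 volume))
    (hv : ∀ φ : 𝓢(EuclideanSpace ℝ (Fin n), ℂ),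
      inner ℂ g (φ.toLp 2 volume) = inner ℂ v (((schwartzNegLap n ^ m) φ).toLp 2 volume)) :
    inner ℂ f v = inner ℂ u g := by
  rw [← Lp.inner_fourier_eq f v, ← Lp.inner_fourier_eq u g, L2.inner_def, L2.inner_def]
  refine integral_congr_ae ?_
  filter_upwards [fourier_ae_eq_negLapSymbol_mul hu, fourier_ae_eq_negLapSymbol_mul hv]
    with ξ hf hg
  rw [hf, hg]
  simp only [RCLike.inner_apply, map_mul, Complex.conj_ofReal]
  ring

theorem isFormalAdjoint_adjoint {m n : ℕ} (hn : 1 ≤ n) (hmn : 4 * m ≤ n) :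
    (negLapPowOp m n).adjoint.IsFormalAdjoint (negLapPowOp m n).adjoint := by
  intro x y
  exact inner_eq_inner_of_weak_solution
    (inner_eq_inner_schwartzNegLap_pow hn hmn fun φ hφ => inner_adjoint_of_isTestAwayZero hn x hφ)
    (inner_eq_inner_schwartzNegLap_pow hn hmn fun φ hφ => inner_adjoint_of_isTestAwayZero hn y hφ)

theorem stmt15 (m n : ℕ) (hm : 1 ≤ m) (hn : 2 ≤ n) :
    EssentiallySelfAdjoint (negLapPowOp m n) ↔ 4 * m ≤ n := by
  have hn1 : 1 ≤ n := by omega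
  have hd := dense_domain_negLapPowOp m n hn1
  have hiff := LinearPMap.isSelfAdjoint_adjoint_iff hd (isFormalAdjoint_negLapPowOp m n)
  refine ⟨fun h => ?_, fun h => ⟨hd, hiff.2 (isFormalAdjoint_adjoint hn1 h)⟩⟩
  by_contra hlt
  exact not_isFormalAdjoint_adjoint hn1 (not_le.1 hlt) (hiff.1 h.2)
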